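/- A point x ∈ T⁷ is a fixed point of β if and only if 2x₂ = 0, 2x₃ = 0, 2x₆ = ½ and 2x₇ = 0 in ℝ/ℤ; consequently the fixed point set of β is a disjoint union of 16 three-dimensional subtori of T⁷. -/

import Mathlib

/-- The 7-torus `T⁷ = (ℝ/ℤ)⁷`. -/
abbrev T7 : Type := Fin 7 → AddCircle (1 : ℝ)

/-- The element `½ ∈ ℝ/ℤ`. -/
noncomputable def half : AddCircle (1 : ℝ) := ((1 / 2 : ℝ) : AddCircle (1 : ℝ))

/-- `α(x) = (x₁, x₂, x₃, −x₄, −x₅, −x₆, −x₇)` on `T⁷` (with 0-based indexing). -/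
noncomputable def tα : T7 → T7 := fun x => ![x 0, x 1, x 2, -x 3, -x 4, -x 5, -x 6]

/-- `β(x) = (x₁, −x₂, −x₃, x₄, x₅, ½−x₆, −x₇)` on `T⁷` (with 0-based indexing). -/
noncomputable def tβ : T7 → T7 := fun x => ![x 0, -x 1, -x 2, x 3, x 4, half - x 5, -x 6]

/-- `γ(x) = (−x₁, x₂, −x₃, x₄, ½−x₅, x₆, ½−x₇)` on `T⁷` (with 0-based indexing). -/
noncomputable def tγ : T7 → T7 := fun x => ![-x 0, x 1, -x 2, x 3, half - x 4, x 5, half - x 6]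

lemma tα_invol : Function.Involutive tα := by
  intro x; funext i
  fin_cases i
  · rfl
  · rfl
  · rfl
  · exact neg_neg _
  · exact neg_neg _
  · exact neg_neg _
  · exact neg_neg _

lemma tβ_invol : Function.Involutive tβ := by
  intro x; funext i
  fin_cases i
  · rfl
  · exact neg_neg _
  · exact neg_neg _
  · rfl
  · rfl
  · exact sub_sub_cancel _ _
  · exact neg_neg _

lemma tγ_invol : Function.Involutive tγ := by
  intro x; funext i
  fin_cases i
  · exact neg_neg _
  · rfl
  · exact neg_neg _
  · rfl
  · exact sub_sub_cancel _ _
  · rfl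
  · exact sub_sub_cancel _ _

/-- `α` as a bijection (element of the group of bijections) of `T⁷`. -/
noncomputable def pα : Equiv.Perm T7 := Function.Involutive.toPerm tα tα_invol

/-- `β` as a bijection (element of the group of bijections) of `T⁷`. -/
noncomputable def pβ : Equiv.Perm T7 := Function.Involutive.toPerm tβ tβ_invol

/-- `γ` as a bijection (element of the group of bijections) of `T⁷`. -/
noncomputable def pγ : Equiv.Perm T7 := Function.Involutive.toPerm tγ tγ_invol

lemma half_add_half : half + half = 0 := by
  unfold half
  rw [← AddCircle.coe_add]
  norm_num

lemma half_ne_zero' : half ≠ 0 := by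
  unfold half
  intro h
  rw [AddCircle.coe_eq_zero_iff] at h
  obtain ⟨n, hn⟩ := h
  have h2 : ((2 * n : ℤ) : ℝ) = ((1 : ℤ) : ℝ) := by
    push_cast
    simp at hn
    linarith
  have h3 : 2 * n = 1 := by exact_mod_cast h2
  omega

lemma two_torsion (y : AddCircle (1 : ℝ)) : y + y = 0 ↔ y = 0 ∨ y = half := by
  constructor
  · induction y using QuotientAddGroup.induction_on with
    | H r =>
      intro h
      have h' : ((r + r : ℝ) : AddCircle (1 : ℝ)) = 0 := h
      rw [AddCircle.coe_eq_zero_iff] at h'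
      obtain ⟨n, hn⟩ := h'
      simp at hn
      rcases Int.even_or_odd' n with ⟨k, rfl | rfl⟩
      · left
        refine (AddCircle.coe_eq_zero_iff 1).2 ⟨k, ?_⟩
        push_cast at hn
        simp
        linarith
      · right
        have : r = 1 / 2 + k • (1 : ℝ) := by
          push_cast at hn
          simp
          linarith
        rw [this]
        unfold half
        change ((1 / 2 + k • (1 : ℝ) : ℝ) : AddCircle (1 : ℝ)) = _
        rw [AddCircle.coe_add, (AddCircle.coe_eq_zero_iff 1).2 ⟨k, rfl⟩, add_zero]
  · rintro (rfl | rfl)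
    · simp
    · exact half_add_half

/-- The element `¼ ∈ ℝ/ℤ`. -/
noncomputable def quarter : AddCircle (1 : ℝ) := ((1 / 4 : ℝ) : AddCircle (1 : ℝ))

lemma quarter_add_quarter : quarter + quarter = half := by
  unfold half quarter
  rw [← AddCircle.coe_add]
  norm_num

lemma half_torsion (y : AddCircle (1 : ℝ)) :
    y + y = half ↔ y = quarter ∨ y = quarter + half := by
  have h := two_torsion (y - quarter)
  rw [sub_eq_zero, sub_eq_iff_eq_add, add_comm half] at h
  rw [← h, ← quarter_add_quarter, ← sub_eq_zero]
  constructor <;> intro h <;> rw [← h] <;> abel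

/-- `0` or `½` according to a bit. -/
noncomputable def bit (b : Fin 2) : AddCircle (1 : ℝ) := if b = 0 then 0 else half

lemma bit_injective : Function.Injective bit := by
  intro a b h
  have := half_ne_zero'
  fin_cases a <;> fin_cases b <;> simp_all [bit]

lemma two_torsion_bit (y : AddCircle (1 : ℝ)) : y + y = 0 ↔ ∃ b, y = bit b := by
  rw [two_torsion]
  simp [Fin.exists_fin_two, bit]

lemma half_torsion_bit (y : AddCircle (1 : ℝ)) : y + y = half ↔ ∃ b, y = quarter + bit b := by
  rw [half_torsion]
  simp [Fin.exists_fin_two, bit]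

lemma fixed_iff (x : T7) : tβ x = x ↔
    (x 1 + x 1 = 0 ∧ x 2 + x 2 = 0 ∧ x 5 + x 5 = half ∧ x 6 + x 6 = 0) := by
  have e : ∀ y : AddCircle (1 : ℝ), -y = y ↔ y + y = 0 := fun y => neg_eq_iff_add_eq_zero
  have e' : ∀ y : AddCircle (1 : ℝ), half - y = y ↔ y + y = half := fun y => by
    rw [sub_eq_iff_eq_add, eq_comm]
  rw [← e, ← e, ← e, ← e', funext_iff]
  constructor
  · intro h
    exact ⟨h 1, h 2, h 5, h 6⟩
  · rintro ⟨h1, h2, h5, h6⟩ i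
    fin_cases i
    exacts [rfl, h1, h2, rfl, rfl, h5, h6]

/-- The slice with the given four bits. -/
def slice (p : (Fin 2 × Fin 2) × (Fin 2 × Fin 2)) : Set T7 :=
  {x : T7 | x 1 = bit p.1.1 ∧ x 2 = bit p.1.2 ∧ x 5 = quarter + bit p.2.1 ∧ x 6 = bit p.2.2}

/-- `x` is a fixed point of `β` iff `2x₂ = 0, 2x₃ = 0, 2x₆ = ½, 2x₇ = 0` in `ℝ/ℤ`; consequently
the fixed point set of `β` is a disjoint union of 16 three-dimensional subtori of `T⁷`
(coordinate slices in the coordinates `x₂, x₃, x₆, x₇`, i.e. 0-based indices 1,2,5,6). -/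
theorem statement7 :
    (∀ x : T7, tβ x = x ↔
      (x 1 + x 1 = 0 ∧ x 2 + x 2 = 0 ∧ x 5 + x 5 = half ∧ x 6 + x 6 = 0)) ∧
    ∃ F : Fin 16 → Set T7,
      ({x : T7 | tβ x = x} = ⋃ i, F i) ∧
      (Pairwise fun i j => Disjoint (F i) (F j)) ∧
      (∀ i, (F i).Nonempty) ∧
      (∀ i, ∃ a b c d : AddCircle (1 : ℝ),
        F i = {x : T7 | x 1 = a ∧ x 2 = b ∧ x 5 = c ∧ x 6 = d}) := by
  refine ⟨fixed_iff, ?_⟩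
  have e : Fin 16 ≃ (Fin 2 × Fin 2) × (Fin 2 × Fin 2) := Fintype.equivOfCardEq (by simp)
  refine ⟨fun i => slice (e i), ?_, ?_, ?_, ?_⟩
  · rw [e.surjective.iUnion_comp slice]
    ext x
    simp only [Set.mem_setOf_eq, Set.mem_iUnion, slice]
    rw [fixed_iff, two_torsion_bit, two_torsion_bit, two_torsion_bit, half_torsion_bit]
    constructor
    · rintro ⟨⟨a, ha⟩, ⟨b, hb⟩, ⟨c, hc⟩, ⟨d, hd⟩⟩
      exact ⟨((a, b), (c, d)), ha, hb, hc, hd⟩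
    · rintro ⟨p, ha, hb, hc, hd⟩
      exact ⟨⟨_, ha⟩, ⟨_, hb⟩, ⟨_, hc⟩, ⟨_, hd⟩⟩
  · intro i j hij
    rw [Set.disjoint_left]
    rintro x ⟨h1, h2, h5, h6⟩ ⟨k1, k2, k5, k6⟩
    apply hij
    apply e.injective
    refine Prod.ext (Prod.ext ?_ ?_) (Prod.ext ?_ ?_) <;> apply bit_injective
    · exact h1.symm.trans k1
    · exact h2.symm.trans k2
    · exact add_left_cancel (h5.symm.trans k5)
    · exact h6.symm.trans k6
  · intro i
    exact ⟨![0, bit (e i).1.1, bit (e i).1.2, 0, 0, quarter + bit (e i).2.1, bit (e i).2.2],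
      rfl, rfl, rfl, rfl⟩
  · intro i
    exact ⟨_, _, _, _, rfl⟩
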